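/- Let G be any group with a collection {σ_j | j ∈ J} of pairwise non-isomorphic splittings, where σ_j is a splitting over H_j, and for each j let X_j be the almost invariant set arising from σ_j. Let Σ := ⋃_{j∈J} Σ(X_j) and define a binary relation ≤ on Σ by: A ≤ B if and only if A ∩ B* is empty or is the only small corner of the pair (A,B). Then ≤ is a partial order on Σ (reflexive, antisymmetric, and transitive). -/

import Mathlib

/-!
A set arising from a splitting is a half-space of a tree, seen through the orbit map of the base
vertex. Its stabilizer is the edge stabilizer (`GTree.IsSpl.stabilizer_standardSet`), right
translation changes it only by a set finite over that stabilizer because finitely many edges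
separate two vertices (`GTree.standardSet_exit`), and neither it nor its complement is small because
half-trees are unbounded (`GTree.IsSpl.standardSet_not_hfinite`). So every element of `Σ` is a
nontrivial almost invariant set over its own stabilizer (`IsGood`), and the rest of the argument
takes place in the class of such sets.

For sets in this class, smallness of a corner of `(A, B)` does not depend on which of the two
stabilizers is used (`small_symm`), and almost inclusion, smallness of the corner `A ∩ B*`, is
transitive (`AlmostLE.trans`). Both facts come from `hfinite_inter`. Nontriviality shows moreover
that if `A` is almost contained in `B`, then neither `A ∩ B` nor `A* ∩ B*` is small. Hence the only
corner that can be small besides `A ∩ B*` is `A* ∩ B`, which means that `B` is almost contained in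
`A`; if also `A ≤ B`, then by definition of `≤` this forces `A ⊆ B` (`AILE.subset`).

Antisymmetry is immediate. For transitivity, let `A ≤ B ≤ C`. Then `A` is almost contained in `C`,
and either `A ∩ C*` is the only small corner of `(A, C)`, or `C` is almost contained in `A`. In the
latter case the three sets are almost contained in each other, so `A ⊆ B ⊆ C`.
-/

open scoped Pointwise

universe u v w

/-- A subset `S` of `G` is `H`-finite if it is contained in the union of
finitely many right cosets `Hg` of `H` in `G`. -/
def HFinite {G : Type u} [Group G] (H : Subgroup G) (S : Set G) : Prop :=
  ∃ F : Finset G, S ⊆ ⋃ g ∈ F, (H : Set G) * {g}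

/-- Two subsets of `G` are `H`-almost equal if their symmetric difference is `H`-finite. -/
def HAlmostEqual {G : Type u} [Group G] (H : Subgroup G) (A B : Set G) : Prop :=
  HFinite H ((A \ B) ∪ (B \ A))

/-- `X` is an `H`-almost invariant subset of `G`: `hX = X` for all `h ∈ H`, and for
every `g ∈ G` the symmetric difference of `Xg` and `X` is `H`-finite. -/
def IsAlmostInvariant {G : Type u} [Group G] (H : Subgroup G) (X : Set G) : Prop :=
  (∀ h ∈ H, (fun x => h * x) '' X = X) ∧
    ∀ g : G, HAlmostEqual H ((fun x => x * g) '' X) X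

/-- An `H`-almost invariant set is nontrivial if neither it nor its complement is `H`-finite. -/
def IsNontrivialAI {G : Type u} [Group G] (H : Subgroup G) (X : Set G) : Prop :=
  ¬ HFinite H X ∧ ¬ HFinite H Xᶜ

/-- A `G`-tree: a connected acyclic simple graph together with an action of `G` on its
vertices by graph automorphisms, such that no element of `G` interchanges the two
endpoints of any edge. -/
structure GTree (G : Type u) [Group G] (V : Type v) where
  graph : SimpleGraph V
  smul : G → V → V
  smul_one : ∀ x : V, smul 1 x = x
  smul_mul : ∀ (g h : G) (x : V), smul (g * h) x = smul g (smul h x)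
  adj_smul : ∀ (g : G) (x y : V), graph.Adj x y → graph.Adj (smul g x) (smul g y)
  no_inversion : ∀ (g : G) (x y : V), graph.Adj x y → ¬ (smul g x = y ∧ smul g y = x)
  connected : graph.Connected
  acyclic : graph.IsAcyclic

namespace GTree

variable {G : Type u} [Group G] {V : Type v}

/-- The stabilizer of the directed edge `(a, b)`. -/
def edgeStab (T : GTree G V) (a b : V) : Subgroup G where
  carrier := {g : G | T.smul g a = a ∧ T.smul g b = b}
  one_mem' := ⟨T.smul_one a, T.smul_one b⟩
  mul_mem' := by
    rintro x y ⟨hxa, hxb⟩ ⟨hya, hyb⟩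
    exact ⟨by rw [T.smul_mul, hya, hxa], by rw [T.smul_mul, hyb, hxb]⟩
  inv_mem' := by
    rintro x ⟨hxa, hxb⟩
    constructor
    · conv_lhs => rw [← hxa]
      rw [← T.smul_mul, inv_mul_cancel, T.smul_one]
    · conv_lhs => rw [← hxb]
      rw [← T.smul_mul, inv_mul_cancel, T.smul_one]

/-- The `a`-side of the directed edge `(a, b)`: the set of vertices reachable from `a`
after deleting the edge `{a, b}`. -/
def side (T : GTree G V) (a b : V) : Set V :=
  {x : V | (T.graph.deleteEdges {s(a, b)}).Reachable a x}

/-- The standard set determined by the directed edge `(a, b)` and the base vertex `v`: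
`{g ∈ G | g • v lies in the a-side of (a, b)}`. -/
def standardSet (T : GTree G V) (a b : V) (v : V) : Set G :=
  {g : G | T.smul g v ∈ T.side a b}

/-- `(T, a, b)` is a splitting of `G` over `H`: the `G`-tree `T` has no global fixed
vertex, `G` acts transitively on the undirected edges, `(a, b)` is a directed edge,
and the stabilizer of `(a, b)` is `H`. -/
def IsSplitting (T : GTree G V) (a b : V) (H : Subgroup G) : Prop :=
  T.graph.Adj a b ∧
  (∀ x : V, ∃ g : G, T.smul g x ≠ x) ∧
  (∀ c d : V, T.graph.Adj c d →
    ∃ g : G, (T.smul g a = c ∧ T.smul g b = d) ∨ (T.smul g a = d ∧ T.smul g b = c)) ∧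
  T.edgeStab a b = H

/-- Two `G`-trees are (`G`-equivariantly) isomorphic: there is a graph isomorphism
commuting with the `G`-actions. -/
def EquivIso {V₁ : Type v} {V₂ : Type w} (T₁ : GTree G V₁) (T₂ : GTree G V₂) : Prop :=
  ∃ f : T₁.graph ≃g T₂.graph, ∀ (g : G) (x : V₁), f (T₁.smul g x) = T₂.smul g (f x)

end GTree

/-- `Σ(X)`: the family of all translates of `X` and of its complement. -/
def TransSet {G : Type u} [Group G] (X : Set G) : Set (Set G) :=
  {A : Set G | ∃ g : G, A = g • X ∨ A = (g • X)ᶜ}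

/-- A corner `C` of a pair `(A, B)` is small if it is `Stab(A)`-finite. -/
def SmallCorner {G : Type u} [Group G] (A C : Set G) : Prop :=
  HFinite (MulAction.stabilizer G A) C

/-- At least two of four statements hold. -/
def TwoOfFour (P₁ P₂ P₃ P₄ : Prop) : Prop :=
  (P₁ ∧ P₂) ∨ (P₁ ∧ P₃) ∨ (P₁ ∧ P₄) ∨ (P₂ ∧ P₃) ∨ (P₂ ∧ P₄) ∨ (P₃ ∧ P₄)

/-- Almost inclusion: `A ≤ B` iff `A ∩ B*` is empty or is the only small corner of `(A, B)`. -/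
def AILE {G : Type u} [Group G] (A B : Set G) : Prop :=
  A ∩ Bᶜ = ∅ ∨
    (SmallCorner A (A ∩ Bᶜ) ∧ ¬ SmallCorner A (A ∩ B) ∧ ¬ SmallCorner A (Aᶜ ∩ B) ∧ ¬ SmallCorner A (Aᶜ ∩ Bᶜ))

/-- `A` crosses `B`: no corner of the pair `(A, B)` is small. -/
def AICrosses {G : Type u} [Group G] (A B : Set G) : Prop :=
  ¬ SmallCorner A (A ∩ B) ∧ ¬ SmallCorner A (A ∩ Bᶜ) ∧ ¬ SmallCorner A (Aᶜ ∩ B) ∧ ¬ SmallCorner A (Aᶜ ∩ Bᶜ)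

/-- A finite family of almost invariant sets satisfies sandwiching. -/
def Sandwiching {G : Type u} [Group G] {n : ℕ} (X : Fin n → Set G) : Prop :=
  ∀ j k : Fin n,
    (∃ A ∈ TransSet (X k), ∃ B ∈ TransSet (X k), AILE A (X j) ∧ AILE (X j) B) ∨
    ∀ A ∈ TransSet (X k), AICrosses (X j) A

/-- The splitting over `H` is a trivially ascending HNN extension: `H` is normal in `G`
and `G/H` is infinite cyclic. -/
def TrivAscHNN {G : Type u} [Group G] (H : Subgroup G) : Prop :=
  H.Normal ∧ ∃ t : G, (∀ g : G, ∃ n : ℤ, g * (t ^ n)⁻¹ ∈ H) ∧ ∀ n : ℤ, t ^ n ∈ H → n = 0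

/-- Two subsets are nested if one of the four inclusions among them and their
complements holds. -/
def Nested {G : Type u} (A B : Set G) : Prop :=
  A ⊆ B ∨ A ⊆ Bᶜ ∨ Aᶜ ⊆ B ∨ Aᶜ ⊆ Bᶜ

/-- `X` crosses `Y` with respect to the subgroup `L`: no corner of `(X, Y)` is `L`-finite. -/
def CrossesWrt {G : Type u} [Group G] (L : Subgroup G) (X Y : Set G) : Prop :=
  ¬ HFinite L (X ∩ Y) ∧ ¬ HFinite L (X ∩ Yᶜ) ∧ ¬ HFinite L (Xᶜ ∩ Y) ∧ ¬ HFinite L (Xᶜ ∩ Yᶜ)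

/-! ### Smallness of corners -/

section Smallness

variable {G : Type u} [Group G] {H K : Subgroup G} {A B C S : Set G}

theorem hfinite_iff : HFinite H S ↔ ∃ F : Finset G, ∀ s ∈ S, ∃ f ∈ F, s * f⁻¹ ∈ H := by
  constructor
  · rintro ⟨F, hF⟩
    refine ⟨F, fun s hs => ?_⟩
    have := hF hs
    simp only [Set.mem_iUnion] at this
    obtain ⟨f, hf, h, hh, f', rfl, rfl⟩ := this
    exact ⟨_, hf, by simpa using hh⟩
  · rintro ⟨F, hF⟩
    refine ⟨F, fun s hs => ?_⟩
    obtain ⟨f, hf, hh⟩ := hF s hs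
    simp only [Set.mem_iUnion]
    exact ⟨f, hf, _, hh, f, rfl, by simp⟩

theorem HFinite.mono (hS : HFinite H S) {S' : Set G} (h : S' ⊆ S) : HFinite H S' := by
  obtain ⟨F, hF⟩ := hS
  exact ⟨F, h.trans hF⟩

theorem hfinite_empty : HFinite H (∅ : Set G) := ⟨∅, by simp⟩

theorem HFinite.union {S' : Set G} (h : HFinite H S) (h' : HFinite H S') :
    HFinite H (S ∪ S') := by
  classical
  rw [hfinite_iff] at *
  obtain ⟨F, hF⟩ := h
  obtain ⟨F', hF'⟩ := h'
  refine ⟨F ∪ F', ?_⟩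
  rintro s (hs | hs)
  · obtain ⟨f, hf, h⟩ := hF s hs
    exact ⟨f, by simp [hf], h⟩
  · obtain ⟨f, hf, h⟩ := hF' s hs
    exact ⟨f, by simp [hf], h⟩

theorem HFinite.preimage_mul_right (h : HFinite H S) (g : G) : HFinite H {x | x * g ∈ S} := by
  classical
  rw [hfinite_iff] at *
  obtain ⟨F, hF⟩ := h
  refine ⟨F.image (· * g⁻¹), fun s hs => ?_⟩
  obtain ⟨f, hf, h⟩ := hF _ hs
  exact ⟨f * g⁻¹, Finset.mem_image_of_mem _ hf, by simpa [mul_assoc] using h⟩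

theorem HFinite.biUnion (F : Finset G) (t : G → Set G) (h : ∀ f ∈ F, HFinite H (t f)) :
    HFinite H (⋃ f ∈ F, t f) := by
  classical
  induction F using Finset.induction_on with
  | empty => simpa using hfinite_empty
  | insert a F _ ih =>
    rw [Finset.set_biUnion_insert]
    exact (h a (by simp)).union (ih fun f hf => h f (by simp [hf]))

/-- If right translation by any element moves only an `H`-finite part of `A` out of `A`, then it
also moves only an `H`-finite part of the complement into `A`. -/
theorem hfinite_enter (hA : ∀ g, HFinite H {x | x ∈ A ∧ x * g ∉ A}) (g : G) :
    HFinite H {x | x ∉ A ∧ x * g ∈ A} := by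
  refine ((hA g⁻¹).preimage_mul_right g).mono ?_
  rintro x ⟨h1, h2⟩
  exact ⟨h2, by simpa using h1⟩

/-- If `B` is left `K`-invariant but not `K`-finite, and `A ∩ B` is `K`-finite, then some coset
`Kg ⊆ B` misses `A`; by `H`-almost invariance of `A`, every coset `Kf` then meets `A` in an
`H`-finite set. -/
theorem hfinite_inter (hA : ∀ g, HFinite H {x | x ∈ A ∧ x * g ∉ A})
    (hB : ∀ k ∈ K, ∀ x ∈ B, k * x ∈ B) (hB' : ¬ HFinite K B)
    (hAB : HFinite K (A ∩ B)) (hS : HFinite K S) : HFinite H (S ∩ A) := by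
  rw [hfinite_iff] at hB' hAB hS
  obtain ⟨F, hF⟩ := hAB
  obtain ⟨F', hF'⟩ := hS
  push Not at hB'
  obtain ⟨g, hgB, hg⟩ := hB' F
  have key : ∀ k ∈ K, k * g ∉ A := by
    intro k hk hkA
    obtain ⟨f, hf, h⟩ := hF (k * g) ⟨hkA, hB k hk g hgB⟩
    refine hg f hf ?_
    have := K.mul_mem (K.inv_mem hk) h
    simpa [mul_assoc] using this
  have : HFinite H (⋃ f ∈ F', ({x | x * f⁻¹ ∈ {y | y ∈ A ∧ y * g ∉ A}} ∪
      {x | x * f⁻¹ ∈ {y | y ∉ A ∧ y * f ∈ A}})) :=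
    HFinite.biUnion _ _ fun f _ => ((hA g).preimage_mul_right _).union
      ((hfinite_enter hA f).preimage_mul_right _)
  refine this.mono ?_
  rintro x ⟨hxS, hxA⟩
  obtain ⟨f, hf, h⟩ := hF' x hxS
  simp only [Set.mem_iUnion]
  refine ⟨f, hf, ?_⟩
  by_cases hx : x * f⁻¹ ∈ A
  · exact Or.inl ⟨hx, key _ h⟩
  · exact Or.inr ⟨hx, by simpa using hxA⟩

/-- `A` is a nontrivial almost invariant set over its own stabilizer. Right almost invariance is
recorded through the one-sided differences `{x ∈ A | xg ∉ A}`. -/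
structure IsGood (A : Set G) : Prop where
  exit : ∀ g, HFinite (MulAction.stabilizer G A) {x | x ∈ A ∧ x * g ∉ A}
  not_small : ¬ SmallCorner A A
  not_small_compl : ¬ SmallCorner A Aᶜ

theorem stabilizer_compl' (A : Set G) :
    MulAction.stabilizer G Aᶜ = MulAction.stabilizer G A := by
  ext g
  simp [MulAction.mem_stabilizer_iff]

theorem smallCorner_compl : SmallCorner Aᶜ S ↔ SmallCorner A S := by
  rw [SmallCorner, SmallCorner, stabilizer_compl']

theorem IsGood.compl (h : IsGood A) : IsGood Aᶜ where
  exit g := by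
    rw [stabilizer_compl']
    refine (hfinite_enter h.exit g).mono ?_
    rintro x ⟨h1, h2⟩
    exact ⟨h1, by simpa using h2⟩
  not_small := by rw [smallCorner_compl]; exact h.not_small_compl
  not_small_compl := by rw [smallCorner_compl, compl_compl]; exact h.not_small

theorem stabilizer_mul_mem {k x : G} (hk : k ∈ MulAction.stabilizer G A) (hx : x ∈ A) :
    k * x ∈ A := by
  rw [MulAction.mem_stabilizer_iff] at hk
  rw [← hk]
  exact Set.smul_mem_smul_set hx

/-- `A` is contained in `B` up to a small corner; unlike `AILE`, nothing is required of the other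
corners. -/
def AlmostLE (A B : Set G) : Prop := SmallCorner A (A ∩ Bᶜ)

/-- Smallness of the corner `A ∩ B` is symmetric in `A` and `B`. -/
theorem small_symm (hA : IsGood A) (hB : IsGood B) (h : SmallCorner A (A ∩ B)) :
    SmallCorner B (A ∩ B) := by
  have := hfinite_inter (S := A ∩ B) hB.exit (fun k hk x hx => stabilizer_mul_mem hk hx)
    hA.not_small (by rw [Set.inter_comm]; exact h) h
  exact HFinite.mono this fun x hx => ⟨hx, hx.2⟩

theorem AlmostLE.symm_small (hA : IsGood A) (hB : IsGood B) (h : AlmostLE A B) :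
    SmallCorner B (A ∩ Bᶜ) :=
  smallCorner_compl.1 (small_symm hA hB.compl h)

theorem AlmostLE.compl (hA : IsGood A) (hB : IsGood B) (h : AlmostLE A B) :
    AlmostLE Bᶜ Aᶜ := by
  rw [AlmostLE, smallCorner_compl, compl_compl, Set.inter_comm]
  exact h.symm_small hA hB

theorem AlmostLE.trans (hA : IsGood A) (hB : IsGood B) (h : AlmostLE A B)
    (h' : AlmostLE B C) : AlmostLE A C := by
  have h1 : HFinite (MulAction.stabilizer G A) ((B ∩ Cᶜ) ∩ A) := by
    refine hfinite_inter hA.exit (fun k hk x hx => ?_) hB.not_small_compl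
      (h.symm_small hA hB) h'
    rw [← stabilizer_compl'] at hk
    exact stabilizer_mul_mem hk hx
  refine HFinite.mono (h1.union h) ?_
  rintro x ⟨hx, hxC⟩
  by_cases hxB : x ∈ B
  · exact Or.inl ⟨⟨hxB, hxC⟩, hx⟩
  · exact Or.inr ⟨hx, hxB⟩

theorem AlmostLE.not_compl (hA : IsGood A) (h : AlmostLE A B) : ¬ AlmostLE A Bᶜ := by
  intro h'
  refine hA.not_small (HFinite.mono (HFinite.union h h') ?_)
  intro x hx
  by_cases hxB : x ∈ B
  · exact Or.inr ⟨hx, by simpa using hxB⟩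
  · exact Or.inl ⟨hx, hxB⟩

theorem AlmostLE.not_compl_left (hA : IsGood A) (hB : IsGood B) (h : AlmostLE A B) :
    ¬ AlmostLE Aᶜ B := by
  intro h'
  have := h'.compl hA.compl hB
  rw [compl_compl] at this
  exact (h.compl hA hB).not_compl hB.compl (by rwa [compl_compl])

theorem smallCorner_smul (g : G) (h : SmallCorner A S) : SmallCorner (g • A) (g • S) := by
  classical
  unfold SmallCorner at *
  rw [hfinite_iff] at *
  obtain ⟨F, hF⟩ := h
  refine ⟨F.image (g * ·), ?_⟩
  rintro _ ⟨s, hs, rfl⟩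
  obtain ⟨f, hf, h⟩ := hF s hs
  refine ⟨g * f, Finset.mem_image_of_mem _ hf, ?_⟩
  rw [MulAction.mem_stabilizer_iff] at *
  have : g • s * (g * f)⁻¹ = g * (s * f⁻¹) * g⁻¹ := by simp [mul_assoc]
  rw [this, mul_smul, mul_smul, inv_smul_smul, h]

theorem AILE.almostLE (h : AILE A B) : AlmostLE A B := by
  rcases h with h | h
  · rw [AlmostLE, h]
    exact hfinite_empty
  · exact h.1

theorem IsGood.smul (g : G) (h : IsGood A) : IsGood (g • A) where
  exit x := by
    refine HFinite.mono (smallCorner_smul g (h.exit x)) ?_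
    rintro _ ⟨⟨y, hy, rfl⟩, h2⟩
    refine ⟨y, ⟨hy, fun h3 => h2 ⟨_, h3, ?_⟩⟩, rfl⟩
    simp [mul_assoc]
  not_small h' := h.not_small (by simpa using smallCorner_smul g⁻¹ h')
  not_small_compl h' := h.not_small_compl
    (by simpa [Set.smul_set_compl] using smallCorner_smul g⁻¹ h')

end Smallness

/-! ### Half-trees -/

namespace GTree

variable {G : Type u} [Group G] {V : Type v} (T : GTree G V) {a b x y z w p q : V}

theorem smul_inv_smul' (g : G) (x : V) : T.smul g (T.smul g⁻¹ x) = x := by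
  rw [← T.smul_mul, mul_inv_cancel, T.smul_one]

theorem inv_smul_smul' (g : G) (x : V) : T.smul g⁻¹ (T.smul g x) = x := by
  rw [← T.smul_mul, inv_mul_cancel, T.smul_one]

theorem smul_inj {g : G} (h : T.smul g x = T.smul g y) : x = y := by
  rw [← T.inv_smul_smul' g x, h, T.inv_smul_smul']

theorem smul_inv_eq {g : G} (h : T.smul g x = y) : T.smul g⁻¹ y = x := by
  rw [← h, T.inv_smul_smul']

theorem adj_smul_iff (g : G) : T.graph.Adj (T.smul g x) (T.smul g y) ↔ T.graph.Adj x y :=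
  ⟨fun h => by simpa only [T.inv_smul_smul'] using T.adj_smul g⁻¹ _ _ h, T.adj_smul g x y⟩

theorem left_mem_side : a ∈ T.side a b := SimpleGraph.Reachable.refl _

theorem right_notMem_side (h : T.graph.Adj a b) : b ∉ T.side a b := by
  have := SimpleGraph.isAcyclic_iff_forall_isBridge.1 T.acyclic
    ((SimpleGraph.mem_edgeSet T.graph).2 h)
  rwa [SimpleGraph.isBridge_iff] at this

/-- The only edge leaving the half-tree `side a b` is `(a, b)` itself. -/
theorem exit_side (h : T.graph.Adj a b) (hpq : T.graph.Adj p q) (hp : p ∈ T.side a b)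
    (hq : q ∉ T.side a b) : p = a ∧ q = b := by
  by_cases he : s(p, q) = s(a, b)
  · rcases Sym2.eq_iff.1 he with h1 | ⟨rfl, rfl⟩
    · exact h1
    · exact absurd T.left_mem_side hq
  · refine absurd ?_ hq
    have h2 : (T.graph.deleteEdges {s(a, b)}).Adj p q := by
      rw [SimpleGraph.deleteEdges_adj]
      exact ⟨hpq, he⟩
    exact SimpleGraph.Reachable.trans hp h2.reachable

theorem side_induction (Q : V → Prop) (ha : Q a)
    (hs : ∀ p q, p ∈ T.side a b → q ∈ T.side a b → T.graph.Adj p q → Q p → Q q) :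
    ∀ p ∈ T.side a b, Q p := by
  rintro p ⟨wk₀⟩
  suffices ∀ u (wk : (T.graph.deleteEdges {s(a, b)}).Walk u p), u ∈ T.side a b → Q u → Q p from
    this a wk₀ T.left_mem_side ha
  clear wk₀
  intro u wk
  induction wk with
  | nil => exact fun _ h => h
  | cons hadj wk' ih =>
    intro hu hQ
    have hv := SimpleGraph.Reachable.trans hu hadj.reachable
    exact ih hv (hs _ _ hu hv ((SimpleGraph.deleteEdges_adj).1 hadj).1 hQ)

theorem graph_induction (Q : V → Prop) (ha : Q a)
    (hs : ∀ p q, T.graph.Adj p q → Q p → Q q) (p : V) : Q p := by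
  obtain ⟨wk⟩ := T.connected a p
  induction wk with
  | nil => exact ha
  | cons hadj wk' ih => exact ih (hs _ _ hadj ha)

theorem side_subset (h' : T.graph.Adj z w) (hx : x ∈ T.side z w) (hw : w ∉ T.side x y) :
    T.side x y ⊆ T.side z w := by
  refine T.side_induction (· ∈ T.side z w) hx fun p q hp hq hpq hpz => ?_
  by_contra hqz
  obtain ⟨rfl, rfl⟩ := T.exit_side h' hpq hpz hqz
  exact hw hq

theorem side_compl (h : T.graph.Adj a b) : (T.side a b)ᶜ = T.side b a := by
  have h1 : ∀ p, p ∈ T.side a b ∨ p ∈ T.side b a := by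
    refine T.graph_induction (a := a) _ (Or.inl T.left_mem_side) fun p q hpq hp => ?_
    by_contra hq
    push Not at hq
    rcases hp with hp | hp
    · obtain ⟨rfl, rfl⟩ := T.exit_side h hpq hp hq.1
      exact hq.2 T.left_mem_side
    · obtain ⟨rfl, rfl⟩ := T.exit_side h.symm hpq hp hq.2
      exact hq.1 T.left_mem_side
  ext p
  refine ⟨fun hp => (h1 p).resolve_left hp, fun hp hp' => ?_⟩
  have hs : s(a, b) = s(b, a) := Sym2.eq_swap
  have hp2 : (T.graph.deleteEdges {s(a, b)}).Reachable b p := by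
    rw [hs]
    exact hp
  exact T.right_notMem_side h (SimpleGraph.Reachable.trans hp' hp2.symm)

theorem notMem_side (h : T.graph.Adj a b) : p ∉ T.side a b ↔ p ∈ T.side b a := by
  rw [← T.side_compl h]
  rfl

theorem edge_eq_of_side_eq (h : T.graph.Adj a b) (h' : T.graph.Adj x y)
    (he : T.side a b = T.side x y) : a = x ∧ b = y := by
  refine T.exit_side h' h ?_ ?_
  · rw [← he]
    exact T.left_mem_side
  · rw [← he]
    exact T.right_notMem_side h

/-- Any two edges of a tree are nested. -/
theorem side_nested (h : T.graph.Adj x y) (h' : T.graph.Adj z w) :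
    T.side x y ⊆ T.side z w ∨ T.side z w ⊆ T.side x y ∨ T.side x y ⊆ T.side w z ∨
      T.side w z ⊆ T.side x y := by
  by_cases hw : w ∈ T.side x y
  · by_cases hy : y ∈ T.side w z
    · refine Or.inr (Or.inl ?_)
      have : T.side y x ⊆ T.side w z :=
        T.side_subset h'.symm hy fun hz => ?_
      · rw [← T.side_compl h, ← T.side_compl h'] at this
        exact Set.compl_subset_compl.1 this
      · have hz' := (T.notMem_side h).2 hz
        obtain ⟨rfl, rfl⟩ := T.exit_side h h'.symm hw hz'
        exact T.right_notMem_side h'.symm hy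
    · refine Or.inr (Or.inr (Or.inr ?_))
      exact T.side_subset h hw hy
  · by_cases hx : x ∈ T.side z w
    · exact Or.inl (T.side_subset h' hx hw)
    · have hx' := (T.notMem_side h').1 hx
      refine Or.inr (Or.inr (Or.inl (T.side_subset h'.symm hx' fun hz => ?_)))
      obtain ⟨rfl, rfl⟩ := T.exit_side h h' hz hw
      exact hx T.left_mem_side

/-- The half-trees at two distinct neighbours of `y`, the first pointing into `y` and the second
out of it, are nested. -/
theorem side_subset_of_adj (hx : T.graph.Adj x y) (hz : T.graph.Adj y z) (hne : x ≠ z) :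
    T.side x y ⊆ T.side y z := by
  refine T.side_subset hz ?_ ?_
  · by_contra h
    exact hne (T.exit_side hz hx.symm T.left_mem_side h).2
  · intro h
    exact hne (T.exit_side hx hz.symm h (T.right_notMem_side hx)).1.symm

theorem exists_adj_side (h : y ≠ w) : ∃ u, T.graph.Adj y u ∧ w ∈ T.side u y := by
  obtain ⟨wk, hwk⟩ := (T.connected y w).exists_isPath
  cases wk with
  | nil => exact absurd rfl h
  | @cons _ u _ hadj wk' =>
    refine ⟨u, hadj, ?_⟩
    rw [SimpleGraph.Walk.cons_isPath_iff] at hwk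
    by_contra hw
    obtain ⟨d, hd, h1, h2⟩ := wk'.exists_boundary_dart _ (T.left_mem_side (a := u) (b := y)) hw
    obtain ⟨-, h4⟩ := T.exit_side hadj.symm d.adj h1 h2
    exact hwk.2 (h4 ▸ wk'.dart_snd_mem_support_of_mem_darts hd)

theorem smul_mem_side (g : G) (h : T.graph.Adj a b) :
    T.smul g p ∈ T.side (T.smul g a) (T.smul g b) ↔ p ∈ T.side a b := by
  have key : ∀ (g : G) (a b p : V), T.graph.Adj a b → p ∈ T.side a b →
      T.smul g p ∈ T.side (T.smul g a) (T.smul g b) := by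
    intro g a b p h hp
    refine T.side_induction (fun p => T.smul g p ∈ T.side (T.smul g a) (T.smul g b))
      T.left_mem_side (fun p q hp hq hpq hQ => ?_) p hp
    by_contra hcon
    obtain ⟨-, h2⟩ := T.exit_side (T.adj_smul g _ _ h) (T.adj_smul g _ _ hpq) hQ hcon
    exact T.right_notMem_side h (T.smul_inj h2 ▸ hq)
  refine ⟨fun hp => ?_, key g a b p h⟩
  simpa only [T.inv_smul_smul'] using key g⁻¹ _ _ _ (T.adj_smul g _ _ h) hp

theorem side_smul_subset (g : G) (h : T.graph.Adj x y) (h' : T.graph.Adj z w)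
    (hs : T.side x y ⊆ T.side z w) :
    T.side (T.smul g x) (T.smul g y) ⊆ T.side (T.smul g z) (T.smul g w) := by
  intro p hp
  rw [← T.smul_inv_smul' g p, T.smul_mem_side g h] at hp
  rw [← T.smul_inv_smul' g p, T.smul_mem_side g h']
  exact hs hp

/-- Only finitely many edges separate two given vertices. -/
theorem finite_separating (p q : V) :
    {d : V × V | T.graph.Adj d.1 d.2 ∧ p ∈ T.side d.1 d.2 ∧ q ∉ T.side d.1 d.2}.Finite := by
  obtain ⟨wk⟩ := T.connected p q
  refine (wk.darts.map (fun d => d.toProd)).finite_toSet.subset ?_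
  rintro ⟨x, y⟩ ⟨h, hp, hq⟩
  obtain ⟨d, hd, h1, h2⟩ := wk.exists_boundary_dart _ hp hq
  obtain ⟨h3, h4⟩ := T.exit_side h d.adj h1 h2
  exact List.mem_map.2 ⟨d, hd, Prod.ext h3 h4⟩

section Translation

variable {T} {k : G}

theorem pow_side_succ (h : T.graph.Adj a b)
    (hk : T.side (T.smul k a) (T.smul k b) ⊆ T.side a b) (n : ℕ) :
    T.side (T.smul (k ^ (n + 1)) a) (T.smul (k ^ (n + 1)) b) ⊆
      T.side (T.smul (k ^ n) a) (T.smul (k ^ n) b) := by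
  have := T.side_smul_subset (k ^ n) (T.adj_smul k _ _ h) h hk
  rwa [← T.smul_mul, ← T.smul_mul, ← pow_succ] at this

theorem pow_side_anti (h : T.graph.Adj a b)
    (hk : T.side (T.smul k a) (T.smul k b) ⊆ T.side a b) {m n : ℕ} (hmn : m ≤ n) :
    T.side (T.smul (k ^ n) a) (T.smul (k ^ n) b) ⊆
      T.side (T.smul (k ^ m) a) (T.smul (k ^ m) b) := by
  induction n, hmn using Nat.le_induction with
  | base => exact subset_rfl
  | succ n _ ih => exact (pow_side_succ h hk n).trans ih

theorem pow_edge_ne (h : T.graph.Adj a b)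
    (hk : T.side (T.smul k a) (T.smul k b) ⊆ T.side a b)
    (hne : ¬ (T.smul k a = a ∧ T.smul k b = b)) {n : ℕ} (hn : n ≠ 0) :
    k ^ n ∉ T.edgeStab a b := by
  rintro ⟨h1, h2⟩
  have h3 := pow_side_anti h hk (Nat.one_le_iff_ne_zero.2 hn)
  rw [h1, h2, pow_one] at h3
  exact hne (T.edge_eq_of_side_eq (T.adj_smul k _ _ h) h (hk.antisymm h3))

/-- The powers of an element pushing a half-tree into itself push it off every vertex. -/
theorem exists_pow_notMem_side (h : T.graph.Adj a b)
    (hk : T.side (T.smul k a) (T.smul k b) ⊆ T.side a b)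
    (hne : ¬ (T.smul k a = a ∧ T.smul k b = b)) (p : V) :
    ∃ n : ℕ, p ∉ T.side (T.smul (k ^ n) a) (T.smul (k ^ n) b) := by
  by_contra hcon
  push Not at hcon
  have hinj : Function.Injective
      (fun n : ℕ => ((T.smul (k ^ n) a, T.smul (k ^ n) b) : V × V)) := by
    intro m n hmn
    wlog hlt : m < n generalizing m n
    · rcases lt_trichotomy m n with h | h | h
      · exact this hmn h
      · exact h
      · exact (this hmn.symm h).symm
    simp only [Prod.mk.injEq] at hmn
    refine absurd ?_ (pow_edge_ne h hk hne (Nat.sub_ne_zero_of_lt hlt))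
    have hpow : k ^ n = k ^ m * k ^ (n - m) := by
      rw [← pow_add, Nat.add_sub_cancel' hlt.le]
    constructor
    · have := hmn.1
      rw [hpow, T.smul_mul] at this
      exact (T.smul_inj this).symm
    · have := hmn.2
      rw [hpow, T.smul_mul] at this
      exact (T.smul_inj this).symm
  refine Set.infinite_of_injective_forall_mem hinj (fun n => ?_) (T.finite_separating p b)
  refine ⟨T.adj_smul _ _ _ h, hcon n, fun hb => T.right_notMem_side h ?_⟩
  have := pow_side_anti h hk (Nat.zero_le n) hb
  simpa only [pow_zero, T.smul_one] using this

end Translation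

end GTree

/-! ### Standard sets are nontrivial almost invariant sets -/

namespace GTree

variable {G : Type u} [Group G] {V : Type v} {T : GTree G V} {a b x y z w p q v : V}

/-- `G` fixes no vertex of `T` and is transitive on undirected edges. This is `IsSplitting`
without a distinguished edge. -/
structure IsSpl (T : GTree G V) : Prop where
  no_fixed : ∀ x : V, ∃ g : G, T.smul g x ≠ x
  trans : ∀ {a b c d : V}, T.graph.Adj a b → T.graph.Adj c d →
    ∃ g : G, (T.smul g a = c ∧ T.smul g b = d) ∨ (T.smul g a = d ∧ T.smul g b = c)

theorem IsSplitting.isSpl {H : Subgroup G} (h : T.IsSplitting a b H) : T.IsSpl where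
  no_fixed := h.2.1
  trans := by
    intro p q c d hpq hcd
    obtain ⟨g, hg⟩ := h.2.2.1 p q hpq
    obtain ⟨k, hk⟩ := h.2.2.1 c d hcd
    refine ⟨k * g⁻¹, ?_⟩
    rw [T.smul_mul, T.smul_mul]
    rcases hg with ⟨h1, h2⟩ | ⟨h1, h2⟩
    · rw [T.smul_inv_eq h1, T.smul_inv_eq h2]
      exact hk
    · rw [T.smul_inv_eq h1, T.smul_inv_eq h2]
      exact hk.symm.imp And.symm And.symm

theorem IsSpl.exists_adj (hT : T.IsSpl) (x : V) : ∃ y, T.graph.Adj x y := by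
  obtain ⟨g, hg⟩ := hT.no_fixed x
  obtain ⟨y, hy, -⟩ := T.exists_adj_side hg.symm
  exact ⟨y, hy⟩

/-- A leaf would force the tree to be a single inverted edge or a star with fixed centre. -/
theorem IsSpl.no_leaf (hT : T.IsSpl) (h : T.graph.Adj x y) : ∃ z, T.graph.Adj x z ∧ z ≠ y := by
  by_contra hcon
  push Not at hcon
  have leaf : ∀ (g : G) (u : V), T.graph.Adj (T.smul g x) u → u = T.smul g y := by
    intro g u hu
    rw [← T.smul_inv_smul' g u, T.adj_smul_iff] at hu
    rw [← hcon _ hu, T.smul_inv_smul']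
  by_cases hg : ∃ g, T.smul g x = y
  · obtain ⟨g, hg⟩ := hg
    have h1 := leaf g x (by rw [hg]; exact h.symm)
    exact T.no_inversion g x y h ⟨hg, h1.symm⟩
  · have hg' : ∀ g, T.smul g y ≠ x := fun g h1 => hg ⟨g⁻¹, T.smul_inv_eq h1⟩
    have nbr : ∀ u, T.graph.Adj y u → ∃ g, T.smul g y = y ∧ T.smul g x = u := by
      intro u hu
      obtain ⟨g, ⟨h1, h2⟩ | ⟨h1, h2⟩⟩ := hT.trans h hu
      · exact absurd ⟨g, h1⟩ hg
      · exact ⟨g, h2, h1⟩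
    have all : ∀ p, p = y ∨ T.graph.Adj y p := by
      refine T.graph_induction (a := y) _ (Or.inl rfl) fun p q hpq hp => ?_
      rcases hp with rfl | hp
      · exact Or.inr hpq
      · obtain ⟨g, h1, h2⟩ := nbr p hp
        left
        rw [leaf g q (by rw [h2]; exact hpq), h1]
    obtain ⟨g, hgy⟩ := hT.no_fixed y
    obtain ⟨k, h1, h2⟩ := nbr _ ((all (T.smul g y)).resolve_left hgy)
    refine hg' (k⁻¹ * g) ?_
    rw [T.smul_mul, ← h2, T.inv_smul_smul']

/-- Since there are no leaves, every half-tree contains half-trees arbitrarily far from its edge. -/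
theorem IsSpl.exists_far (hT : T.IsSpl) (h : T.graph.Adj a b) (n : ℕ) :
    ∃ x y, T.graph.Adj x y ∧ T.side x y ⊆ T.side a b ∧ ∀ p ∈ T.side x y, n ≤ T.graph.dist b p := by
  classical
  induction n with
  | zero => exact ⟨a, b, h, subset_rfl, fun _ _ => Nat.zero_le _⟩
  | succ n ih =>
    obtain ⟨x, y, hxy, hs, hd⟩ := ih
    obtain ⟨x', hx', hne⟩ := hT.no_leaf hxy
    have hs' := T.side_subset_of_adj hx'.symm hxy hne
    refine ⟨x', x, hx'.symm, hs'.trans hs, fun p hp => ?_⟩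
    have hb : b ∉ T.side x' x := fun hb => T.right_notMem_side h (hs (hs' hb))
    obtain ⟨wk, hwk⟩ := T.connected.exists_walk_length_eq_dist b p
    obtain ⟨d, hdm, h1, h2⟩ := wk.exists_boundary_dart (T.side x' x)ᶜ hb (fun h => h hp)
    obtain ⟨-, h4⟩ := T.exit_side hx'.symm d.adj.symm (not_not.1 h2) h1
    have hxm : x ∈ wk.support := h4 ▸ wk.dart_fst_mem_support_of_mem_darts hdm
    have h5 := hd x T.left_mem_side
    have h6 := SimpleGraph.dist_le (wk.takeUntil x hxm)
    have h7 : (wk.takeUntil x hxm).length + (wk.dropUntil x hxm).length = wk.length := by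
      rw [← SimpleGraph.Walk.length_append, wk.take_spec]
    have h8 : (wk.dropUntil x hxm).length ≠ 0 := by
      intro h0
      have := SimpleGraph.Walk.eq_of_length_eq_zero h0
      exact T.right_notMem_side hx'.symm (this ▸ hp)
    omega

theorem IsSpl.exists_orbit (hT : T.IsSpl) (v : V) (h : T.graph.Adj x y) :
    ∃ g, T.smul g v = x ∨ T.smul g v = y := by
  obtain ⟨u, hu⟩ := hT.exists_adj v
  obtain ⟨g, h1 | h1⟩ := hT.trans hu h
  · exact ⟨g, Or.inl h1.1⟩
  · exact ⟨g, Or.inr h1.1⟩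

theorem dist_smul_le (g : G) (x y : V) :
    T.graph.dist (T.smul g x) (T.smul g y) ≤ T.graph.dist x y := by
  obtain ⟨wk, hwk⟩ := T.connected.exists_walk_length_eq_dist x y
  let φ : T.graph →g T.graph := ⟨T.smul g, fun h => T.adj_smul g _ _ h⟩
  have := SimpleGraph.dist_le (wk.map φ)
  rw [SimpleGraph.Walk.length_map, hwk] at this
  exact this

/-- Half-trees are unbounded, while an `H`-finite set of translates of `v` stays within bounded
distance of the edge fixed by `H`. -/
theorem IsSpl.standardSet_not_hfinite (hT : T.IsSpl) (h : T.graph.Adj a b) (v : V) :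
    ¬ HFinite (T.edgeStab a b) (T.standardSet a b v) := by
  intro hfin
  rw [hfinite_iff] at hfin
  obtain ⟨F, hF⟩ := hfin
  obtain ⟨x, y, hxy, hs, hd⟩ := hT.exists_far h (F.sup (fun f => T.graph.dist b (T.smul f v)) + 1)
  obtain ⟨x', hx', hne⟩ := hT.no_leaf hxy
  have hs' := T.side_subset_of_adj hx'.symm hxy hne
  obtain ⟨g, hg⟩ := hT.exists_orbit v hx'
  have hgm : T.smul g v ∈ T.side x y := by
    rcases hg with hg | hg
    · rw [hg]
      exact T.left_mem_side
    · rw [hg]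
      exact hs' T.left_mem_side
  obtain ⟨f, hf, hk⟩ := hF g (hs hgm)
  have h1 := hd _ hgm
  have h2 : T.graph.dist b (T.smul g v) ≤ T.graph.dist b (T.smul f v) := by
    have := dist_smul_le (T := T) (g * f⁻¹) b (T.smul f v)
    rw [← T.smul_mul, inv_mul_cancel_right, hk.2] at this
    exact this
  have h3 := Finset.le_sup (f := fun f => T.graph.dist b (T.smul f v)) hf
  have h4 := h1.trans h2
  have h5 := h4.trans h3
  exact absurd h5 (Nat.not_succ_le_self _)

/-- A set of group elements is finite over an edge stabilizer as soon as their inverses carry the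
edge to finitely many places. -/
theorem hfinite_of_finite_image {S : Set G}
    (h : ((fun g => (T.smul g⁻¹ x, T.smul g⁻¹ y)) '' S).Finite) : HFinite (T.edgeStab x y) S := by
  classical
  rw [hfinite_iff]
  set φ : G → V × V := fun g => (T.smul g⁻¹ x, T.smul g⁻¹ y) with hφ
  refine ⟨h.toFinset.image (Function.invFunOn φ S), fun s hs => ?_⟩
  refine ⟨Function.invFunOn φ S (φ s), Finset.mem_image_of_mem _ ?_, ?_⟩
  · rw [Set.Finite.mem_toFinset]
    exact Set.mem_image_of_mem _ hs
  · have := Function.invFunOn_eq (f := φ) (s := S) (b := φ s) ⟨s, hs, rfl⟩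
    set f := Function.invFunOn φ S (φ s)
    simp only [hφ, Prod.mk.injEq] at this
    constructor
    · rw [T.smul_mul, this.1, T.smul_inv_smul']
    · rw [T.smul_mul, this.2, T.smul_inv_smul']

theorem mem_side_inv_smul {g : G} (h : T.graph.Adj x y) :
    p ∈ T.side (T.smul g⁻¹ x) (T.smul g⁻¹ y) ↔ T.smul g p ∈ T.side x y := by
  rw [← T.smul_mem_side g (T.adj_smul _ _ _ h), T.smul_inv_smul', T.smul_inv_smul']

theorem standardSet_exit (h : T.graph.Adj a b) (v : V) (g : G) :
    HFinite (T.edgeStab a b) {x | x ∈ T.standardSet a b v ∧ x * g ∉ T.standardSet a b v} := by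
  refine hfinite_of_finite_image ((T.finite_separating v (T.smul g v)).subset ?_)
  rintro _ ⟨s, ⟨h1, h2⟩, rfl⟩
  refine ⟨T.adj_smul _ _ _ h, (mem_side_inv_smul h).2 h1, fun h3 => h2 ?_⟩
  have := (mem_side_inv_smul h).1 h3
  rwa [← T.smul_mul] at this

theorem smul_standardSet (h : T.graph.Adj x y) (v : V) (g : G) :
    g • T.standardSet x y v = T.standardSet (T.smul g x) (T.smul g y) v := by
  ext k
  rw [Set.mem_smul_set_iff_inv_smul_mem]
  change T.smul (g⁻¹ * k) v ∈ T.side x y ↔ T.smul k v ∈ T.side (T.smul g x) (T.smul g y)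
  rw [T.smul_mul, ← T.smul_mem_side g h, T.smul_inv_smul']

theorem standardSet_compl (h : T.graph.Adj x y) (v : V) :
    (T.standardSet x y v)ᶜ = T.standardSet y x v := by
  ext k
  exact T.notMem_side (p := T.smul k v) h

theorem standardSet_mono (h : T.side x y ⊆ T.side z w) (v : V) :
    T.standardSet x y v ⊆ T.standardSet z w v := fun _ hk => h hk

theorem IsSpl.standardSet_nonempty (hT : T.IsSpl) (h : T.graph.Adj a b) (v : V) :
    (T.standardSet a b v).Nonempty := by
  rw [Set.nonempty_iff_ne_empty]
  intro h0
  apply hT.standardSet_not_hfinite h v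
  rw [h0]
  exact hfinite_empty

theorem edgeStab_swap : T.edgeStab a b = T.edgeStab b a := by
  ext g
  exact and_comm

theorem IsSpl.stabilizer_aux (hT : T.IsSpl) (h : T.graph.Adj a b) {g : G}
    (hg : g • T.standardSet a b v = T.standardSet a b v)
    (hs : T.side (T.smul g a) (T.smul g b) ⊆ T.side a b) : g ∈ T.edgeStab a b := by
  by_contra hne
  obtain ⟨x, hx⟩ := hT.standardSet_nonempty h v
  obtain ⟨n, hn⟩ := exists_pow_notMem_side h hs hne (T.smul x v)
  apply hn
  have hgn : ∀ n : ℕ, g ^ n • T.standardSet a b v = T.standardSet a b v := by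
    intro n
    induction n with
    | zero => simp
    | succ n ih => rw [pow_succ, mul_smul, hg, ih]
  have := hx
  rw [← hgn n, smul_standardSet h] at this
  exact this

/-- The stabilizer of a standard set is the stabilizer of its edge. -/
theorem IsSpl.stabilizer_standardSet (hT : T.IsSpl) (h : T.graph.Adj a b) (v : V) :
    MulAction.stabilizer G (T.standardSet a b v) = T.edgeStab a b := by
  ext g
  rw [MulAction.mem_stabilizer_iff]
  constructor
  · intro hg
    have hga := T.adj_smul g _ _ h
    have hg2 := hg
    rw [smul_standardSet h] at hg2
    obtain ⟨x, hx⟩ := hT.standardSet_nonempty h v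
    obtain ⟨y, hy⟩ := hT.standardSet_nonempty h.symm v
    rcases T.side_nested h hga with hs | hs | hs | hs
    · refine (T.edgeStab a b).inv_mem_iff.1 (hT.stabilizer_aux (v := v) h ?_ ?_)
      · rw [inv_smul_eq_iff, hg]
      · have := T.side_smul_subset g⁻¹ h hga hs
        rwa [T.inv_smul_smul', T.inv_smul_smul'] at this
    · exact hT.stabilizer_aux h hg hs
    · have h1 := standardSet_mono hs v hx
      rw [← standardSet_compl hga, hg2] at h1
      exact absurd hx h1
    · rw [← standardSet_compl h, ← hg2, standardSet_compl hga] at hy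
      have h1 := standardSet_mono hs v hy
      rw [← hg2, ← standardSet_compl hga.symm] at h1
      exact absurd hy h1
  · rintro ⟨h1, h2⟩
    rw [smul_standardSet h, h1, h2]

theorem IsSpl.isGood (hT : T.IsSpl) (h : T.graph.Adj a b) (v : V) :
    IsGood (T.standardSet a b v) where
  exit := by
    rw [hT.stabilizer_standardSet h]
    exact standardSet_exit h v
  not_small := by
    rw [SmallCorner, hT.stabilizer_standardSet h]
    exact hT.standardSet_not_hfinite h v
  not_small_compl := by
    rw [SmallCorner, hT.stabilizer_standardSet h, standardSet_compl h, edgeStab_swap]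
    exact hT.standardSet_not_hfinite h.symm v

end GTree

/-! ### The partial order -/

section Order

variable {G : Type u} [Group G] {A B C : Set G}

theorem IsGood.of_transSet (hA : IsGood A) (hB : B ∈ TransSet A) : IsGood B := by
  obtain ⟨g, rfl | rfl⟩ := hB
  · exact hA.smul g
  · exact (hA.smul g).compl

/-- If `A ≤ B` and `B` is almost contained in `A`, then the inclusion `A ⊆ B` is genuine: otherwise
`A ∩ Bᶜ` would be the only small corner of the pair, although `Aᶜ ∩ B` is small too. -/
theorem AILE.subset (hA : IsGood A) (hB : IsGood B) (hle : AILE A B) (hge : AlmostLE B A) :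
    A ⊆ B := by
  rcases hle with h0 | ⟨-, -, h1, -⟩
  · rwa [← Set.sdiff_eq, Set.sdiff_eq_empty] at h0
  · refine absurd ?_ h1
    rw [Set.inter_comm]
    exact hge.symm_small hB hA

theorem AILE.trans (hA : IsGood A) (hB : IsGood B) (hC : IsGood C) (h : AILE A B)
    (h' : AILE B C) : AILE A C := by
  have hAC := h.almostLE.trans hA hB h'.almostLE
  by_cases hCA : AlmostLE C A
  -- If `C` is almost contained in `A`, then all three sets are almost equal, and both given
  -- inclusions are genuine.
  · have h1 := h.subset hA hB (h'.almostLE.trans hB hC hCA)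
    have h2 := h'.subset hB hC (hCA.trans hC hA h.almostLE)
    left
    rw [← Set.sdiff_eq, Set.sdiff_eq_empty]
    exact h1.trans h2
  · refine Or.inr ⟨hAC, fun hs => ?_, fun hs => hCA ?_, fun hs => ?_⟩
    · exact hAC.not_compl hA (by rwa [AlmostLE, compl_compl])
    · have := small_symm hA.compl hC (smallCorner_compl.2 hs)
      rwa [AlmostLE, Set.inter_comm]
    · exact hAC.not_compl_left hA hC (smallCorner_compl.2 hs)

end Order

/-- for a collection of pairwise non-isomorphic splittings, almost
inclusion (`A ≤ B` iff `A ∩ B*` is empty or is the only small corner of `(A, B)`)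
is a partial order on `Σ`: reflexive, antisymmetric and transitive. -/
theorem statement8 {G : Type u} [Group G] {J : Type w} {V : J → Type v}
    (T : ∀ j, GTree G (V j)) (a b v : ∀ j, V j) (H : J → Subgroup G)
    (hsplit : ∀ j, (T j).IsSplitting (a j) (b j) (H j))
    (X : J → Set G) (hX : ∀ j, X j = (T j).standardSet (a j) (b j) (v j))
    (hnoniso : ∀ j k, j ≠ k → ¬ (T j).EquivIso (T k)) :
    (∀ A ∈ ⋃ j, TransSet (X j), AILE A A) ∧
    (∀ A ∈ ⋃ j, TransSet (X j), ∀ B ∈ ⋃ j, TransSet (X j),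
      AILE A B → AILE B A → A = B) ∧
    (∀ A ∈ ⋃ j, TransSet (X j), ∀ B ∈ ⋃ j, TransSet (X j), ∀ C ∈ ⋃ j, TransSet (X j),
      AILE A B → AILE B C → AILE A C) := by
  have good : ∀ A ∈ ⋃ j, TransSet (X j), IsGood A := by
    intro A hA
    obtain ⟨j, hj⟩ := Set.mem_iUnion.1 hA
    refine IsGood.of_transSet ?_ hj
    rw [hX j]
    exact (hsplit j).isSpl.isGood (hsplit j).1 (v j)
  refine ⟨fun A _ => Or.inl (Set.inter_compl_self A), fun A hA B hB h h' => ?_,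
    fun A hA B hB C hC h h' => h.trans (good A hA) (good B hB) (good C hC) h'⟩
  exact Set.Subset.antisymm (h.subset (good A hA) (good B hB) h'.almostLE)
    (h'.subset (good B hB) (good A hA) h.almostLE)
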